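/- arXiv:1508.03507 — 3 statements merged into one kernel-verified Lean document; each statement's English description precedes it below -/
import Mathlib

section
/- Let a, b, c be real numbers with 0 < a < 1, 0 < b < 1, c > 0, and a·c² < 1. Then the series ∑ a^X · b^Y · c^{min(X,Y) + min(X,2Y)}, taken over all pairs of positive integers (X,Y) with X > Y, converges and equals a²·b·c³·(1 − a²·b·c²) / ((1 − a²·b·c³)·(1 − a)·(1 − a·b·c²)). -/
/-!
The cone `1 ≤ Y < X` is cut along the ray `X = 2Y`, where `min(X, 2Y)` changes its formula. Each
half is a translate of a free commutative monoid on two generators: `2Y ≤ X` is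
`(2, 1) + ℕ(2, 1) + ℕ(1, 0)` and `Y < X < 2Y` is `(3, 2) + ℕ(1, 1) + ℕ(2, 1)`. On each half the
exponent of `c` is linear, so the sum there is the monomial at the vertex times a product of two
geometric series whose ratios are the monomials of the generators: `a²bc³` for `(2, 1)`, `a` for
`(1, 0)` and `abc²` for `(1, 1)`.
-/

theorem hasSum_geometric_mul_geometric {K : Type*} [NormedDivisionRing K] {x y : K}
    (hx : ‖x‖ < 1) (hy : ‖y‖ < 1) :
    HasSum (fun n : ℕ × ℕ => x ^ n.1 * y ^ n.2) ((1 - x)⁻¹ * (1 - y)⁻¹) :=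
  have hx_sum := hasSum_geometric_of_norm_lt_one hx
  have hy_sum := hasSum_geometric_of_norm_lt_one hy
  hx_sum.mul hy_sum <| summable_mul_of_summable_norm'
    (summable_norm_geometric_of_norm_lt_one hx) hx_sum.summable
    (summable_norm_geometric_of_norm_lt_one hy) hy_sum.summable

/-- The partition of the pairs `(X, Y)` of positive integers with `Y < X` into the lower cone
`2Y ≤ X` (left summand) and the upper cone `X < 2Y` (right summand), each in the coordinates given
by its generators: `(2, 1)` and `(1, 0)` for the lower cone, `(1, 1)` and `(2, 1)` for the upper. -/
def lowerConeSumUpperConeEquiv :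
    (ℕ × ℕ) ⊕ (ℕ × ℕ) ≃ {p : ℕ+ × ℕ+ // (p.2 : ℕ) < (p.1 : ℕ)} where
  toFun
    | .inl (i, j) => ⟨((2 * i + j + 1).succPNat, i.succPNat), by
        simp only [Nat.succPNat_coe]; omega⟩
    | .inr (i, j) => ⟨((i + 2 * j + 2).succPNat, (i + j + 1).succPNat), by
        simp only [Nat.succPNat_coe]; omega⟩
  invFun p :=
    if 2 * (p.1.2 : ℕ) ≤ p.1.1 then .inl (p.1.2 - 1, p.1.1 - 2 * p.1.2)
    else .inr (2 * p.1.2 - p.1.1 - 1, p.1.1 - p.1.2 - 1)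
  left_inv := by
    rintro (⟨i, j⟩ | ⟨i, j⟩) <;> grind [Nat.succPNat_coe]
  right_inv := by
    rintro ⟨⟨X, Y⟩, hYX : (Y : ℕ) < X⟩
    have hY := Y.pos
    by_cases h : 2 * (Y : ℕ) ≤ X
    · simp only [if_pos h, Subtype.mk.injEq, Prod.mk.injEq, ← PNat.coe_inj, Nat.succPNat_coe]
      omega
    · simp only [if_neg h, Subtype.mk.injEq, Prod.mk.injEq, ← PNat.coe_inj, Nat.succPNat_coe]
      omega

theorem hasSum_of_lowerCone_of_upperCone {M : Type*} [AddCommMonoid M] [TopologicalSpace M]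
    [ContinuousAdd M] {f : ℕ → ℕ → M} {s t : M}
    (hs : HasSum (fun n : ℕ × ℕ => f (2 * n.1 + n.2 + 2) (n.1 + 1)) s)
    (ht : HasSum (fun n : ℕ × ℕ => f (n.1 + 2 * n.2 + 3) (n.1 + n.2 + 2)) t) :
    HasSum (fun p : {p : ℕ+ × ℕ+ // (p.2 : ℕ) < (p.1 : ℕ)} => f p.1.1 p.1.2) (s + t) :=
  lowerConeSumUpperConeEquiv.hasSum_iff.mp (HasSum.sum hs ht)

/-- The summand `a^X b^Y c^(min(X,Y) + min(X,2Y))` of the series. -/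
def minMonomial {M : Type*} [Monoid M] (a b c : M) (X Y : ℕ) : M :=
  a ^ X * b ^ Y * c ^ (min X Y + min X (2 * Y))

section CommSemiring

variable {R : Type*} [CommSemiring R]

theorem minMonomial_lowerCone (a b c : R) (i j : ℕ) :
    minMonomial a b c (2 * i + j + 2) (i + 1) =
      a ^ 2 * b * c ^ 3 * ((a ^ 2 * b * c ^ 3) ^ i * a ^ j) := by
  rw [minMonomial, min_eq_right (by omega), min_eq_right (by omega)]
  ring

theorem minMonomial_upperCone (a b c : R) (i j : ℕ) :
    minMonomial a b c (i + 2 * j + 3) (i + j + 2) =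
      a ^ 3 * b ^ 2 * c ^ 5 * ((a * b * c ^ 2) ^ i * (a ^ 2 * b * c ^ 3) ^ j) := by
  rw [minMonomial, min_eq_right (by omega), min_eq_left (by omega)]
  ring

end CommSemiring

section NormedField

variable {K : Type*} [NormedField K] {a b c : K}

theorem hasSum_minMonomial_lowerCone (ha : ‖a‖ < 1) (h21 : ‖a ^ 2 * b * c ^ 3‖ < 1) :
    HasSum (fun n : ℕ × ℕ => minMonomial a b c (2 * n.1 + n.2 + 2) (n.1 + 1))
      (a ^ 2 * b * c ^ 3 * ((1 - a ^ 2 * b * c ^ 3)⁻¹ * (1 - a)⁻¹)) := by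
  simp only [minMonomial_lowerCone]
  exact (hasSum_geometric_mul_geometric h21 ha).mul_left _

theorem hasSum_minMonomial_upperCone (h11 : ‖a * b * c ^ 2‖ < 1)
    (h21 : ‖a ^ 2 * b * c ^ 3‖ < 1) :
    HasSum (fun n : ℕ × ℕ => minMonomial a b c (n.1 + 2 * n.2 + 3) (n.1 + n.2 + 2))
      (a ^ 3 * b ^ 2 * c ^ 5 * ((1 - a * b * c ^ 2)⁻¹ * (1 - a ^ 2 * b * c ^ 3)⁻¹)) := by
  simp only [minMonomial_upperCone]
  exact (hasSum_geometric_mul_geometric h11 h21).mul_left _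

theorem heisenberg_sum_min_XY_plus_min_X_2Y_X_gt_Y_general (ha : ‖a‖ < 1)
    (h11 : ‖a * b * c ^ 2‖ < 1) (h21 : ‖a ^ 2 * b * c ^ 3‖ < 1) :
    HasSum
      (fun p : {p : ℕ+ × ℕ+ // (p.2 : ℕ) < (p.1 : ℕ)} =>
        a ^ (p.1.1 : ℕ) * b ^ (p.1.2 : ℕ) *
          c ^ (min (p.1.1 : ℕ) (p.1.2 : ℕ) + min (p.1.1 : ℕ) (2 * (p.1.2 : ℕ))))
      (a ^ 2 * b * c ^ 3 * (1 - a ^ 2 * b * c ^ 2) /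
        ((1 - a ^ 2 * b * c ^ 3) * (1 - a) * (1 - a * b * c ^ 2))) := by
  have one_sub_ne_zero {x : K} (hx : ‖x‖ < 1) : 1 - x ≠ 0 :=
    sub_ne_zero.mpr fun h => by simp [← h] at hx
  have ha' := one_sub_ne_zero ha
  have h11' := one_sub_ne_zero h11
  have h21' := one_sub_ne_zero h21
  convert hasSum_of_lowerCone_of_upperCone (hasSum_minMonomial_lowerCone ha h21)
    (hasSum_minMonomial_upperCone h11 h21) using 1
  · rfl
  · field_simp
    ring

end NormedField

section Order

variable {R : Type*} [CommRing R] [LinearOrder R] [IsStrictOrderedRing R] {a b c : R}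

theorem sq_mul_pow_three_lt_one (ha0 : 0 ≤ a) (ha1 : a < 1) (hac : a * c ^ 2 < 1) :
    a ^ 2 * c ^ 3 < 1 := by
  have sq_lt_one : (a ^ 2 * c ^ 3) ^ 2 < 1 :=
    calc (a ^ 2 * c ^ 3) ^ 2 = a * (a * c ^ 2) ^ 3 := by ring
      _ < 1 := mul_lt_one_of_nonneg_of_lt_one_left ha0 ha1
        (pow_le_one₀ (by positivity) hac.le)
  exact lt_of_pow_lt_pow_left₀ 2 zero_le_one (by rwa [one_pow])

theorem mul_mul_sq_lt_one (ha : 0 ≤ a) (hb : b ≤ 1) (hac : a * c ^ 2 < 1) :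
    a * b * c ^ 2 < 1 := by
  rw [mul_right_comm]
  exact mul_lt_one_of_nonneg_of_lt_one_left (by positivity) hac hb

theorem sq_mul_mul_pow_three_lt_one (ha0 : 0 ≤ a) (ha1 : a < 1) (hb : b ≤ 1) (hc : 0 ≤ c)
    (hac : a * c ^ 2 < 1) : a ^ 2 * b * c ^ 3 < 1 := by
  rw [mul_right_comm]
  exact mul_lt_one_of_nonneg_of_lt_one_left (by positivity)
    (sq_mul_pow_three_lt_one ha0 ha1 hac) hb

end Order

/-- The part of Lemma 2.3(3) with X > Y:
    ∑_{X>Y≥1} a^X b^Y c^{min(X,Y)+min(X,2Y)}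
    = a²bc³(1-a²bc²)/((1-a²bc³)(1-a)(1-abc²)). -/
theorem heisenberg_sum_min_XY_plus_min_X_2Y_X_gt_Y (a b c : ℝ) (ha0 : 0 < a)
    (ha1 : a < 1) (hb0 : 0 < b) (hb1 : b < 1) (hc : 0 < c) (hac : a * c ^ 2 < 1) :
    HasSum
      (fun p : {p : ℕ+ × ℕ+ // (p.2 : ℕ) < (p.1 : ℕ)} =>
        a ^ (p.1.1 : ℕ) * b ^ (p.1.2 : ℕ) *
          c ^ (min (p.1.1 : ℕ) (p.1.2 : ℕ) + min (p.1.1 : ℕ) (2 * (p.1.2 : ℕ))))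
      (a ^ 2 * b * c ^ 3 * (1 - a ^ 2 * b * c ^ 2) /
        ((1 - a ^ 2 * b * c ^ 3) * (1 - a) * (1 - a * b * c ^ 2))) := by
  apply heisenberg_sum_min_XY_plus_min_X_2Y_X_gt_Y_general <;>
    rw [Real.norm_of_nonneg (by positivity)]
  exacts [ha1, mul_mul_sq_lt_one ha0.le hb1.le hac,
    sq_mul_mul_pow_three_lt_one ha0.le ha1 hb1.le hc.le hac]
end

section
/- Let q and t be real numbers with q > 1, t > 0, and q³·t² < 1. Then the double series ∑_{X≥1} ∑_{Y≥1} q^{3X − Y} · t^{3X − min(X, 3Y)} converges and satisfies (1 − q⁻¹)² · ∑_{X≥1} ∑_{Y≥1} q^{3X − Y} · t^{3X − min(X, 3Y)} = (1 − q⁻¹) · q²·t²·(1 + q³·t² − q³·t³ + q⁶·t⁴ − q⁶·t⁵ − q⁸·t⁷) / ((1 − q³·t³)·(1 − q⁸·t⁶)). -/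
/-
With `a = q³t²` and `u = q⁻¹` the `(X, Y)` term of the series is `a ^ X * u ^ Y * t ^ (X - 3Y)⁺`.
It is multiplicative on each of the cones `X ≤ 3Y` and `X > 3Y`, and parametrizing each cone by
`ℕ × ℕ` turns the series over it into a product of two series in one variable, which are geometric
once `X` is grouped by residue modulo `3`. The ratios that occur are `u`, `q³t³` and
`a³u = q⁸t⁶ = (q⁴t³)²`, so the series converges as soon as `‖q‖ > 1` and `‖q⁴t³‖ < 1`.
-/

section Cones

variable {M : Type*} [AddCommMonoid M] [TopologicalSpace M] [ContinuousAdd M]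

-- With `X = x + 1` and `Y = y + 1`, the two ranges are the cones `X ≤ dY` and `X > dY`.
lemma isCompl_range_div_add_range_mul_add (d : ℕ) [NeZero d] :
    IsCompl (Set.range fun p : ℕ × ℕ => (p.1, p.1 / d + p.2))
      (Set.range fun p : ℕ × ℕ => (d * (p.1 + 1) + p.2, p.1)) := by
  have below : Set.range (fun p : ℕ × ℕ => (p.1, p.1 / d + p.2)) = {p | p.1 / d ≤ p.2} := by
    ext ⟨x, y⟩
    simp [le_iff_exists_add, eq_comm]
  have above : Set.range (fun p : ℕ × ℕ => (d * (p.1 + 1) + p.2, p.1)) = {p | p.2 < p.1 / d} := by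
    ext ⟨x, y⟩
    simp [Nat.lt_iff_add_one_le, Nat.le_div_iff_mul_le (NeZero.pos d), le_iff_exists_add,
      mul_comm d, eq_comm]
  have compl : {p : ℕ × ℕ | p.2 < p.1 / d} = {p | p.1 / d ≤ p.2}ᶜ := by
    ext
    simp
  rw [below, above, compl]
  exact isCompl_compl

lemma hasSum_of_hasSum_div_add_of_hasSum_mul_add {f : ℕ × ℕ → M} {s₁ s₂ : M} (d : ℕ) [NeZero d]
    (h₁ : HasSum (fun p : ℕ × ℕ => f (p.1, p.1 / d + p.2)) s₁)
    (h₂ : HasSum (fun p : ℕ × ℕ => f (d * (p.1 + 1) + p.2, p.1)) s₂) :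
    HasSum f (s₁ + s₂) := by
  have inj₁ : Function.Injective fun p : ℕ × ℕ => (p.1, p.1 / d + p.2) := by
    rintro ⟨x, j⟩ ⟨x', j'⟩ h
    obtain ⟨rfl, h⟩ := Prod.mk.inj h
    exact Prod.ext rfl (Nat.add_left_cancel h)
  have inj₂ : Function.Injective fun p : ℕ × ℕ => (d * (p.1 + 1) + p.2, p.1) := by
    rintro ⟨y, z⟩ ⟨y', z'⟩ h
    obtain ⟨h, rfl⟩ := Prod.mk.inj h
    exact Prod.ext rfl (Nat.add_left_cancel h)
  exact (inj₁.hasSum_range_iff.2 h₁).add_isCompl (isCompl_range_div_add_range_mul_add d)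
    (inj₂.hasSum_range_iff.2 h₂)

end Cones

section Series

lemma hasSum_mul_of_summable_norm {R ι κ : Type*} [NormedRing R] {f : ι → R} {g : κ → R} {s t : R}
    (hf : HasSum f s) (hg : HasSum g t) (hf' : Summable fun i => ‖f i‖)
    (hg' : Summable fun k => ‖g k‖) :
    HasSum (fun p : ι × κ => f p.1 * g p.2) (s * t) :=
  hf.mul hg (summable_mul_of_summable_norm' hf' hf.summable hg' hg.summable)

variable {𝕜 : Type*} [NormedField 𝕜]

lemma hasSum_pow_mul_pow_div {a u : 𝕜} (d : ℕ) [NeZero d] (h : ‖a ^ d * u‖ < 1) :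
    HasSum (fun n : ℕ => a ^ n * u ^ (n / d))
      ((1 - a ^ d * u)⁻¹ * ∑ i ∈ Finset.range d, a ^ i) := by
  have hres : HasSum (fun i : Fin d => a ^ (i : ℕ)) (∑ i ∈ Finset.range d, a ^ i) := by
    simpa only [Finset.sum_range] using hasSum_fintype fun i : Fin d => a ^ (i : ℕ)
  rw [← (Nat.divModEquiv d).symm.hasSum_iff]
  refine (hasSum_mul_of_summable_norm (R := 𝕜) (hasSum_geometric_of_norm_lt_one h) hres
    (summable_norm_geometric_of_norm_lt_one h) .of_finite).congr_fun fun ⟨k, i⟩ => ?_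
  have hdiv : (k * d + i) / d = k := by
    rw [mul_comm, Nat.mul_add_div (NeZero.pos d), Nat.div_eq_of_lt i.is_lt, add_zero]
  simp only [Function.comp_apply, Nat.divModEquiv_symm_apply, hdiv]
  ring

lemma summable_norm_pow_mul_pow_div {a u : 𝕜} (d : ℕ) [NeZero d] (h : ‖a ^ d * u‖ < 1) :
    Summable fun n : ℕ => ‖a ^ n * u ^ (n / d)‖ := by
  have h' : ‖‖a‖ ^ d * ‖u‖‖ < 1 := by simpa using h
  simpa only [norm_mul, norm_pow] using (hasSum_pow_mul_pow_div d h').summable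

theorem hasSum_pow_mul_pow_mul_pow_tsub {a u t : 𝕜} (d : ℕ) [NeZero d] (hu : ‖u‖ < 1)
    (hat : ‖a * t‖ < 1) (hau : ‖a ^ d * u‖ < 1) :
    HasSum (fun p : ℕ+ × ℕ+ =>
        a ^ (p.1 : ℕ) * u ^ (p.2 : ℕ) * t ^ ((p.1 : ℕ) - d * (p.2 : ℕ)))
      (a * u * ((1 - a ^ d * u)⁻¹ * (∑ i ∈ Finset.range d, a ^ i) * (1 - u)⁻¹) +
        a ^ d * u * (a * t) * ((1 - a ^ d * u)⁻¹ * (1 - a * t)⁻¹)) := by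
  rw [← (Equiv.prodCongr Equiv.pnatEquivNat Equiv.pnatEquivNat).symm.hasSum_iff]
  apply hasSum_of_hasSum_div_add_of_hasSum_mul_add d
  · refine ((hasSum_mul_of_summable_norm (R := 𝕜) (hasSum_pow_mul_pow_div d hau)
      (hasSum_geometric_of_norm_lt_one hu) (summable_norm_pow_mul_pow_div d hau)
      (summable_norm_geometric_of_norm_lt_one hu)).mul_left (a * u)).congr_fun fun ⟨x, j⟩ => ?_
    have hcone : x + 1 - d * (x / d + j + 1) = 0 := Nat.sub_eq_zero_of_le <| calc
      x + 1 ≤ d * (x / d + 1) := Nat.lt_mul_div_succ x (NeZero.pos d)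
      _ ≤ d * (x / d + j + 1) := by gcongr; exact Nat.le_add_right _ _
    simp only [Equiv.prodCongr_symm, Equiv.prodCongr_apply, Equiv.pnatEquivNat_symm_apply,
      Function.comp_apply, Prod.map_apply, Nat.succPNat_coe, Nat.succ_eq_add_one, hcone, pow_zero,
      mul_one]
    ring
  · refine ((hasSum_mul_of_summable_norm (R := 𝕜) (hasSum_geometric_of_norm_lt_one hau)
      (hasSum_geometric_of_norm_lt_one hat) (summable_norm_geometric_of_norm_lt_one hau)
      (summable_norm_geometric_of_norm_lt_one hat)).mul_left (a ^ d * u * (a * t))).congr_fun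
      fun ⟨y, z⟩ => ?_
    have hcone : d * (y + 1) + z + 1 - d * (y + 1) = z + 1 := by lia
    simp only [Equiv.prodCongr_symm, Equiv.prodCongr_apply, Equiv.pnatEquivNat_symm_apply,
      Function.comp_apply, Prod.map_apply, Nat.succPNat_coe, Nat.succ_eq_add_one, hcone]
    ring

end Series

lemma zpow_mul_zpow_sub_min {K : Type*} [Field K] {q : K} (hq : q ≠ 0) (t : K) (X Y : ℕ) :
    q ^ (3 * (X : ℤ) - (Y : ℤ)) * t ^ (3 * (X : ℤ) - min (X : ℤ) (3 * (Y : ℤ))) =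
      (q ^ 3 * t ^ 2) ^ X * q⁻¹ ^ Y * t ^ (X - 3 * Y) := by
  have hqpow : q ^ (3 * (X : ℤ) - (Y : ℤ)) = q ^ (3 * X) * q⁻¹ ^ Y := by
    rw [zpow_sub₀ hq, zpow_natCast, inv_pow, div_eq_mul_inv]
    norm_cast
  have htpow : t ^ (3 * (X : ℤ) - min (X : ℤ) (3 * (Y : ℤ))) = t ^ (2 * X + (X - 3 * Y)) := by
    rw [← zpow_natCast]
    congr 1
    lia
  rw [hqpow, htpow]
  ring

lemma norm_pow_four_mul_pow_three_lt_one {K : Type*} [NormedField K] {q t : K} (hq : 1 ≤ ‖q‖)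
    (h : ‖q ^ 3 * t ^ 2‖ < 1) : ‖q ^ 4 * t ^ 3‖ < 1 := by
  refine (sq_lt_one_iff₀ (norm_nonneg _)).1 ?_
  calc ‖q ^ 4 * t ^ 3‖ ^ 2
    _ ≤ ‖q‖ * ‖q ^ 4 * t ^ 3‖ ^ 2 := le_mul_of_one_le_left (sq_nonneg _) hq
    _ = ‖q ^ 3 * t ^ 2‖ ^ 3 := by
      simp only [norm_mul, norm_pow]
      ring
    _ < 1 := pow_lt_one₀ (norm_nonneg _) h three_ne_zero

theorem heisenberg_integral_I_general {𝕜 : Type*} [NormedField 𝕜] {q t : 𝕜} (hq : 1 < ‖q‖)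
    (hqt : ‖q ^ 4 * t ^ 3‖ < 1) :
    HasSum
      (fun p : ℕ+ × ℕ+ =>
        q ^ (3 * ((p.1 : ℕ) : ℤ) - ((p.2 : ℕ) : ℤ)) *
          t ^ (3 * ((p.1 : ℕ) : ℤ) - min ((p.1 : ℕ) : ℤ) (3 * ((p.2 : ℕ) : ℤ))))
      (q ^ 2 * t ^ 2 *
          (1 + q ^ 3 * t ^ 2 - q ^ 3 * t ^ 3 + q ^ 6 * t ^ 4 - q ^ 6 * t ^ 5 - q ^ 8 * t ^ 7) /
        ((1 - q⁻¹) * (1 - q ^ 3 * t ^ 3) * (1 - q ^ 8 * t ^ 6))) := by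
  have hq₀ : q ≠ 0 := norm_pos_iff.1 (zero_lt_one.trans hq)
  have hu : ‖q⁻¹‖ < 1 := by simpa using inv_lt_one_of_one_lt₀ hq
  have hat_eq : q ^ 3 * t ^ 2 * t = q ^ 3 * t ^ 3 := by ring
  have hau_eq : (q ^ 3 * t ^ 2) ^ 3 * q⁻¹ = q ^ 8 * t ^ 6 := by field_simp
  have hat : ‖q ^ 3 * t ^ 3‖ < 1 := by
    have : q ^ 3 * t ^ 3 = q⁻¹ * (q ^ 4 * t ^ 3) := by field_simp
    rw [this, norm_mul]
    exact mul_lt_one_of_nonneg_of_lt_one_left (norm_nonneg _) hu hqt.le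
  have hau : ‖q ^ 8 * t ^ 6‖ < 1 := by
    have : q ^ 8 * t ^ 6 = (q ^ 4 * t ^ 3) ^ 2 := by ring
    rw [this, norm_pow]
    exact pow_lt_one₀ (norm_nonneg _) hqt two_ne_zero
  have one_sub_ne_zero {x : 𝕜} (hx : ‖x‖ < 1) : 1 - x ≠ 0 :=
    sub_ne_zero.2 fun h => by simp [← h] at hx
  have hq₁ : q - 1 ≠ 0 := sub_ne_zero.2 fun h => by simp [h] at hq
  have hat' := one_sub_ne_zero hat
  have hau' := one_sub_ne_zero hau
  simp only [zpow_mul_zpow_sub_min hq₀]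
  convert hasSum_pow_mul_pow_mul_pow_tsub 3 hu (hat_eq ▸ hat) (hau_eq ▸ hau) using 1
  rw [hat_eq, hau_eq]
  simp only [Finset.sum_range_succ, Finset.sum_range_zero]
  field_simp
  ring

/-- Lemma 2.4: the integral I = ∫_{x,y∈𝔭} |x|^{3s-4} ‖x,y³‖^{-s} dμ, expressed as a
    double series, satisfies
    (1-q⁻¹)²·∑_{X,Y≥1} q^{3X-Y} t^{3X-min(X,3Y)}
    = (1-q⁻¹)·q²t²(1+q³t²-q³t³+q⁶t⁴-q⁶t⁵-q⁸t⁷)/((1-q³t³)(1-q⁸t⁶)). -/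
theorem heisenberg_integral_I (q t : ℝ) (hq : 1 < q) (ht : 0 < t)
    (hqt : q ^ 3 * t ^ 2 < 1) :
    ∃ S : ℝ,
      HasSum
        (fun p : ℕ+ × ℕ+ =>
          q ^ (3 * ((p.1 : ℕ) : ℤ) - ((p.2 : ℕ) : ℤ)) *
            t ^ (3 * ((p.1 : ℕ) : ℤ) - min ((p.1 : ℕ) : ℤ) (3 * ((p.2 : ℕ) : ℤ))))
        S ∧
      (1 - q⁻¹) ^ 2 * S =
        (1 - q⁻¹) * (q ^ 2 * t ^ 2 *
            (1 + q ^ 3 * t ^ 2 - q ^ 3 * t ^ 3 + q ^ 6 * t ^ 4 - q ^ 6 * t ^ 5 -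
              q ^ 8 * t ^ 7) /
          ((1 - q ^ 3 * t ^ 3) * (1 - q ^ 8 * t ^ 6))) := by
  have hq_norm : 1 < ‖q‖ := hq.trans_le (le_abs_self q)
  have hqt_norm : ‖q ^ 3 * t ^ 2‖ < 1 := by rwa [Real.norm_of_nonneg (by positivity)]
  have hu : 1 - q⁻¹ ≠ 0 := (sub_pos.2 (inv_lt_one_of_one_lt₀ hq)).ne'
  exact ⟨_, heisenberg_integral_I_general hq_norm
    (norm_pow_four_mul_pow_three_lt_one hq_norm.le hqt_norm), by field_simp [hu]⟩
end

section
/- Let q and t be real numbers with q > 1, t > 0, and q³·t < 1. Then the double series ∑_{X≥1} ∑_{Y≥1} q^{3X − 3Y} · t^{3X − min(X, 2Y) − min(X, 4Y)} converges and equals t/((1 − q⁻³)·(1 − t)) + q³·t²/((1 − t)·(1 − q³·t²)) + q⁶·t⁴/((1 − q⁶·t⁴)·(1 − q³·t²)) + q⁹·t⁶/((1 − q⁹·t⁶)·(1 − q⁶·t⁴)) + q¹²·t⁹/((1 − q³·t³)·(1 − q⁹·t⁶)). -/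
/-!
The exponents of `q` and `t` are linear on each cone of the fan in the quadrant `X, Y ≥ 0` with rays
`(0, 1), (1, 1), (2, 1), (3, 1), (4, 1), (1, 0)`, since they bend only along `X = 2Y` and `X = 4Y`.
Consecutive rays `u, w` form a basis of `ℤ²`, and on the cone they span the summand takes
`a • u + b • w` to `x ^ a * y ^ b`, where `x` and `y` are its values at `u` and `w`; so each cone
contributes a product of two geometric series. The fan arises from the quadrant by cutting the cone
spanned by `(k, 1)` and `(1, 0)` along `(k + 1, 1)` for `k = 0, 1, 2, 3`.
-/

section Subdivision

variable {M : Type*} [AddCommMonoid M] [TopologicalSpace M]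

theorem hasSum_pnat_prod_iff_hasSum_succ {f : ℕ × ℕ → M} {r : M} :
    HasSum (fun p : ℕ+ × ℕ+ => f (p.1, p.2)) r ↔
      HasSum (fun p : ℕ × ℕ => f (p.1 + 1, p.2 + 1)) r :=
  ((Equiv.pnatEquivNat.symm.prodCongr Equiv.pnatEquivNat.symm).hasSum_iff).symm

variable [ContinuousAdd M]

theorem hasSum_nat_prod_of_le_of_lt {f : ℕ × ℕ → M} {r s : M}
    (hle : HasSum (fun p : ℕ × ℕ => f (p.1 + p.2, p.2)) r)
    (hlt : HasSum (fun p : ℕ × ℕ => f (p.1, p.1 + p.2 + 1)) s) : HasSum f (r + s) := by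
  have hle_inj : Function.Injective fun p : ℕ × ℕ => (p.1 + p.2, p.2) := by
    rintro ⟨a, b⟩ ⟨c, d⟩ h
    grind
  have hlt_inj : Function.Injective fun p : ℕ × ℕ => (p.1, p.1 + p.2 + 1) := by
    rintro ⟨a, b⟩ ⟨c, d⟩ h
    grind
  refine HasSum.add_isCompl ?_ (hle_inj.hasSum_range_iff.2 hle) (hlt_inj.hasSum_range_iff.2 hlt)
  refine IsCompl.of_eq (Set.eq_empty_of_forall_notMem ?_) (Set.eq_univ_of_forall ?_)
  · rintro _ ⟨⟨⟨a, b⟩, rfl⟩, ⟨⟨c, d⟩, h⟩⟩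
    grind
  · rintro ⟨X, Y⟩
    rcases le_or_gt Y X with h | h
    · exact Or.inl ⟨(X - Y, Y), by grind⟩
    · exact Or.inr ⟨(X, Y - X - 1), by grind⟩

theorem hasSum_cone_of_subdivision {A : Type*} [AddCommMonoid A] {F : A → M} {u w : A} {r s : M}
    (hu : HasSum (fun p : ℕ × ℕ => F (p.1 • u + (p.2 + 1) • (u + w))) r)
    (hw : HasSum (fun p : ℕ × ℕ => F ((p.1 + 1) • (u + w) + (p.2 + 1) • w)) s) :
    HasSum (fun p : ℕ × ℕ => F ((p.1 + 1) • u + (p.2 + 1) • w)) (r + s) := by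
  apply hasSum_nat_prod_of_le_of_lt
  · refine hu.congr_fun fun p => congrArg F ?_
    module
  · refine hw.congr_fun fun p => congrArg F ?_
    module

theorem hasSum_pnat_prod_of_fan {F : ℕ × ℕ → M} {r : M} {s : ℕ → M} (n : ℕ)
    (hs : ∀ k < n, HasSum (fun p : ℕ × ℕ => F (p.1 • (k, 1) + (p.2 + 1) • (k + 1, 1))) (s k))
    (hr : HasSum (fun p : ℕ × ℕ => F ((p.1 + 1) • (n, 1) + (p.2 + 1) • (1, 0))) r) :
    HasSum (fun p : ℕ+ × ℕ+ => F (p.1, p.2)) (∑ k ∈ Finset.range n, s k + r) := by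
  induction n generalizing r with
  | zero =>
    rw [Finset.sum_range_zero, zero_add, hasSum_pnat_prod_iff_hasSum_succ,
      ← (Equiv.prodComm ℕ ℕ).hasSum_iff]
    simpa [Function.comp_def] using hr
  | succ n ih =>
    rw [Finset.sum_range_succ, add_assoc]
    exact ih (fun k hk => hs k (hk.trans n.lt_succ_self))
      (hasSum_cone_of_subdivision (hs n n.lt_succ_self) hr)

end Subdivision

theorem hasSum_pow_mul_pow {K : Type*} [NormedDivisionRing K] {x y : K}
    (hx : ‖x‖ < 1) (hy : ‖y‖ < 1) :
    HasSum (fun p : ℕ × ℕ => x ^ p.1 * y ^ p.2) ((1 - x)⁻¹ * (1 - y)⁻¹) :=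
  (hasSum_geometric_of_norm_lt_one hx).mul (hasSum_geometric_of_norm_lt_one hy) <|
    summable_mul_of_summable_norm' (summable_norm_geometric_of_norm_lt_one hx)
      (summable_geometric_of_norm_lt_one hx) (summable_norm_geometric_of_norm_lt_one hy)
      (summable_geometric_of_norm_lt_one hy)

/-- `F` is a monoid homomorphism on the cone spanned by `u` and `w`, in the coordinates given by
these two generators; its sum over the cone is then a product of two geometric series. -/
def MultiplicativeOnCone {A R : Type*} [AddCommMonoid A] [Monoid R] (F : A → R) (u w : A) : Prop :=
  ∀ a b : ℕ, F (a • u + b • w) = F u ^ a * F w ^ b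

namespace MultiplicativeOnCone

variable {A K : Type*} [AddCommMonoid A] [NormedField K] {F : A → K} {u w : A}

theorem hasSum_halfOpen (hF : MultiplicativeOnCone F u w) (hu : ‖F u‖ < 1) (hw : ‖F w‖ < 1) :
    HasSum (fun p : ℕ × ℕ => F (p.1 • u + (p.2 + 1) • w)) (F w / ((1 - F u) * (1 - F w))) := by
  rw [div_eq_mul_inv, mul_inv]
  refine ((hasSum_pow_mul_pow hu hw).mul_left (F w)).congr_fun fun p => ?_
  rw [hF]
  ring

theorem hasSum_interior (hF : MultiplicativeOnCone F u w) (hu : ‖F u‖ < 1) (hw : ‖F w‖ < 1) :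
    HasSum (fun p : ℕ × ℕ => F ((p.1 + 1) • u + (p.2 + 1) • w))
      (F u * F w / ((1 - F u) * (1 - F w))) := by
  rw [div_eq_mul_inv, mul_inv]
  refine ((hasSum_pow_mul_pow hu hw).mul_left (F u * F w)).congr_fun fun p => ?_
  rw [hF]
  ring

end MultiplicativeOnCone

theorem hasSum_pnat_prod_of_multiplicativeOnCone {K : Type*} [NormedField K] {F : ℕ × ℕ → K}
    (n : ℕ) (hF : ∀ k < n, MultiplicativeOnCone F (k, 1) (k + 1, 1))
    (hF' : MultiplicativeOnCone F (n, 1) (1, 0))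
    (hnorm : ∀ k ≤ n, ‖F (k, 1)‖ < 1) (hnorm' : ‖F (1, 0)‖ < 1) :
    HasSum (fun p : ℕ+ × ℕ+ => F (p.1, p.2))
      (∑ k ∈ Finset.range n, F (k + 1, 1) / ((1 - F (k, 1)) * (1 - F (k + 1, 1))) +
        F (n, 1) * F (1, 0) / ((1 - F (n, 1)) * (1 - F (1, 0)))) :=
  hasSum_pnat_prod_of_fan n
    (fun k hk => (hF k hk).hasSum_halfOpen (hnorm k hk.le) (hnorm (k + 1) hk))
    (hF'.hasSum_interior (hnorm n le_rfl) hnorm')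

theorem mul_add_mul_tsub_mul_add_mul {x y x' y' : ℕ}
    (h : (x ≤ y ∧ x' ≤ y') ∨ (y ≤ x ∧ y' ≤ x')) (a b : ℕ) :
    (a * x + b * x') - (a * y + b * y') = a * (x - y) + b * (x' - y') := by
  rcases h with ⟨hx, hx'⟩ | ⟨hy, hy'⟩
  · rw [Nat.sub_eq_zero_of_le hx, Nat.sub_eq_zero_of_le hx', mul_zero, mul_zero, add_zero]
    exact Nat.sub_eq_zero_of_le (by gcongr)
  · rw [Nat.mul_sub, Nat.mul_sub]
    exact tsub_add_tsub_comm (by gcongr) (by gcongr) |>.symm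

/-- `u` and `w` lie in the same closed half-plane cut out by the line `X = c * Y`, so that
`(X - c * Y)⁺` is linear on the cone they span. -/
def OnSameSide (c : ℕ) (u w : ℕ × ℕ) : Prop :=
  (u.1 ≤ c * u.2 ∧ w.1 ≤ c * w.2) ∨ (c * u.2 ≤ u.1 ∧ c * w.2 ≤ w.1)

theorem onSameSide_slope_succ (c k : ℕ) : OnSameSide c (k, 1) (k + 1, 1) := by
  rw [OnSameSide]
  omega

theorem onSameSide_slope_horizontal {c n : ℕ} (h : c ≤ n) : OnSameSide c (n, 1) (1, 0) :=
  Or.inr ⟨by simpa using h, by simp⟩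

/-- The exponent `3X - min(X, 2Y) - min(X, 4Y)` of `t`, written as `X + (X - 2Y)⁺ + (X - 4Y)⁺`:
truncated subtraction is the positive part. -/
def tExponent (v : ℕ × ℕ) : ℕ :=
  v.1 + (v.1 - 2 * v.2) + (v.1 - 4 * v.2)

theorem natCast_tExponent (v : ℕ × ℕ) :
    (tExponent v : ℤ) = 3 * v.1 - min (v.1 : ℤ) (2 * v.2) - min (v.1 : ℤ) (4 * v.2) := by
  rw [tExponent]
  omega

theorem tExponent_smul_add_smul {u w : ℕ × ℕ} (h₂ : OnSameSide 2 u w) (h₄ : OnSameSide 4 u w)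
    (a b : ℕ) : tExponent (a • u + b • w) = a * tExponent u + b * tExponent w := by
  have hpos {c : ℕ} (hc : OnSameSide c u w) :
      (a * u.1 + b * w.1) - c * (a * u.2 + b * w.2) =
        a * (u.1 - c * u.2) + b * (w.1 - c * w.2) := by
    rw [← mul_add_mul_tsub_mul_add_mul hc, mul_add, mul_left_comm c, mul_left_comm c]
  simp only [tExponent, Prod.fst_add, Prod.snd_add, Prod.smul_fst, Prod.smul_snd, smul_eq_mul,
    hpos h₂, hpos h₄]
  ring

section Summand

variable {K : Type*}

/-- The summand of the series as a function on the closed quadrant, which contains the rays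
`(0, 1)` and `(1, 0)` spanning the outermost cones. -/
def heisenbergSummand [Field K] (q t : K) (v : ℕ × ℕ) : K :=
  q ^ (3 * (v.1 : ℤ) - 3 * (v.2 : ℤ)) * t ^ tExponent v

theorem multiplicativeOnCone_heisenbergSummand [Field K] {q : K} (hq : q ≠ 0) (t : K)
    {u w : ℕ × ℕ} (h₂ : OnSameSide 2 u w) (h₄ : OnSameSide 4 u w) :
    MultiplicativeOnCone (heisenbergSummand q t) u w := by
  intro a b
  have hexp : 3 * ((a • u + b • w).1 : ℤ) - 3 * ((a • u + b • w).2 : ℤ) =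
      (3 * u.1 - 3 * u.2) * a + (3 * w.1 - 3 * w.2) * b := by
    simp only [Prod.fst_add, Prod.snd_add, Prod.smul_fst, Prod.smul_snd, smul_eq_mul,
      Nat.cast_add, Nat.cast_mul]
    ring
  simp only [heisenbergSummand, tExponent_smul_add_smul h₂ h₄, hexp, zpow_add₀ hq, zpow_mul,
    zpow_natCast]
  ring

theorem heisenbergSummand_zero_one [Field K] (q t : K) :
    heisenbergSummand q t (0, 1) = q⁻¹ ^ 3 := by
  norm_num [heisenbergSummand, tExponent]

theorem heisenbergSummand_one_one [Field K] (q t : K) : heisenbergSummand q t (1, 1) = t := by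
  simp [heisenbergSummand, tExponent]

theorem heisenbergSummand_two_one [Field K] (q t : K) :
    heisenbergSummand q t (2, 1) = q ^ 3 * t ^ 2 := by
  norm_num [heisenbergSummand, tExponent]

theorem heisenbergSummand_three_one [Field K] (q t : K) :
    heisenbergSummand q t (3, 1) = q ^ 6 * t ^ 4 := by
  norm_num [heisenbergSummand, tExponent]

theorem heisenbergSummand_four_one [Field K] (q t : K) :
    heisenbergSummand q t (4, 1) = q ^ 9 * t ^ 6 := by
  norm_num [heisenbergSummand, tExponent]

theorem heisenbergSummand_one_zero [Field K] (q t : K) :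
    heisenbergSummand q t (1, 0) = q ^ 3 * t ^ 3 := by
  norm_num [heisenbergSummand, tExponent]

variable [NormedField K] {q t : K}

theorem norm_lt_one_of_norm_pow_mul_pow_lt_one {m n : ℕ} (hn : n ≠ 0) (hq : 1 ≤ ‖q‖)
    (h : ‖q ^ m * t ^ n‖ < 1) : ‖t‖ < 1 := by
  rw [norm_mul, norm_pow, norm_pow] at h
  exact (pow_lt_one_iff_of_nonneg (norm_nonneg t) hn).1 <|
    (le_mul_of_one_le_left (by positivity) (one_le_pow₀ hq)).trans_lt h

theorem norm_heisenbergSummand_slope_lt_one (hq : 1 < ‖q‖) (hqt : ‖q ^ 3 * t ^ 2‖ < 1)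
    {k : ℕ} (hk : k ≤ 4) : ‖heisenbergSummand q t (k, 1)‖ < 1 := by
  have hpow {n : ℕ} (hn : n ≠ 0) : ‖(q ^ 3 * t ^ 2) ^ n‖ < 1 := by
    rw [norm_pow]
    exact pow_lt_one₀ (norm_nonneg _) hqt hn
  interval_cases k
  · rw [heisenbergSummand_zero_one, norm_pow, norm_inv]
    exact pow_lt_one₀ (by positivity) (inv_lt_one_of_one_lt₀ hq) three_ne_zero
  · rw [heisenbergSummand_one_one]
    exact norm_lt_one_of_norm_pow_mul_pow_lt_one two_ne_zero hq.le hqt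
  · rwa [heisenbergSummand_two_one]
  · rw [heisenbergSummand_three_one]
    convert hpow two_ne_zero using 2
    ring
  · rw [heisenbergSummand_four_one]
    convert hpow three_ne_zero using 2
    ring

theorem norm_heisenbergSummand_one_zero_lt_one (hq : 1 ≤ ‖q‖) (hqt : ‖q ^ 3 * t ^ 2‖ < 1) :
    ‖heisenbergSummand q t (1, 0)‖ < 1 := by
  have ht : ‖t‖ < 1 := norm_lt_one_of_norm_pow_mul_pow_lt_one two_ne_zero hq hqt
  rw [heisenbergSummand_one_zero, pow_succ t, ← mul_assoc, norm_mul]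
  exact mul_lt_one_of_nonneg_of_lt_one_left (norm_nonneg _) hqt ht.le

end Summand

theorem heisenberg_J1_general {K : Type*} [NormedField K] {q t : K} (hq : 1 < ‖q‖)
    (hqt : ‖q ^ 3 * t ^ 2‖ < 1) :
    HasSum
      (fun p : ℕ+ × ℕ+ =>
        q ^ (3 * ((p.1 : ℕ) : ℤ) - 3 * ((p.2 : ℕ) : ℤ)) *
          t ^ (3 * ((p.1 : ℕ) : ℤ) -
            min ((p.1 : ℕ) : ℤ) (2 * ((p.2 : ℕ) : ℤ)) -
            min ((p.1 : ℕ) : ℤ) (4 * ((p.2 : ℕ) : ℤ))))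
      (t / ((1 - q⁻¹ ^ 3) * (1 - t)) +
        q ^ 3 * t ^ 2 / ((1 - t) * (1 - q ^ 3 * t ^ 2)) +
        q ^ 6 * t ^ 4 / ((1 - q ^ 6 * t ^ 4) * (1 - q ^ 3 * t ^ 2)) +
        q ^ 9 * t ^ 6 / ((1 - q ^ 9 * t ^ 6) * (1 - q ^ 6 * t ^ 4)) +
        q ^ 12 * t ^ 9 / ((1 - q ^ 3 * t ^ 3) * (1 - q ^ 9 * t ^ 6))) := by
  have hq0 : q ≠ 0 := norm_pos_iff.1 (one_pos.trans hq)
  have hfan := hasSum_pnat_prod_of_multiplicativeOnCone (F := heisenbergSummand q t) 4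
    (fun k _ => multiplicativeOnCone_heisenbergSummand hq0 t
      (onSameSide_slope_succ 2 k) (onSameSide_slope_succ 4 k))
    (multiplicativeOnCone_heisenbergSummand hq0 t
      (onSameSide_slope_horizontal (by norm_num)) (onSameSide_slope_horizontal le_rfl))
    (fun k hk => norm_heisenbergSummand_slope_lt_one hq hqt hk)
    (norm_heisenbergSummand_one_zero_lt_one hq.le hqt)
  simp only [Finset.sum_range_succ, Finset.sum_range_zero, Nat.reduceAdd, zero_add,
    heisenbergSummand_zero_one, heisenbergSummand_one_one, heisenbergSummand_two_one,
    heisenbergSummand_three_one, heisenbergSummand_four_one,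
    heisenbergSummand_one_zero] at hfan
  convert hfan using 1
  · funext p
    rw [heisenbergSummand, ← zpow_natCast t, natCast_tExponent]
  · ring

/-- The series computing J₁:
    ∑_{X,Y≥1} q^{3X-3Y} t^{3X-min(X,2Y)-min(X,4Y)}. -/
theorem heisenberg_J1 (q t : ℝ) (hq : 1 < q) (ht : 0 < t) (hqt : q ^ 3 * t < 1) :
    HasSum
      (fun p : ℕ+ × ℕ+ =>
        q ^ (3 * ((p.1 : ℕ) : ℤ) - 3 * ((p.2 : ℕ) : ℤ)) *
          t ^ (3 * ((p.1 : ℕ) : ℤ) -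
            min ((p.1 : ℕ) : ℤ) (2 * ((p.2 : ℕ) : ℤ)) -
            min ((p.1 : ℕ) : ℤ) (4 * ((p.2 : ℕ) : ℤ))))
      (t / ((1 - q⁻¹ ^ 3) * (1 - t)) +
        q ^ 3 * t ^ 2 / ((1 - t) * (1 - q ^ 3 * t ^ 2)) +
        q ^ 6 * t ^ 4 / ((1 - q ^ 6 * t ^ 4) * (1 - q ^ 3 * t ^ 2)) +
        q ^ 9 * t ^ 6 / ((1 - q ^ 9 * t ^ 6) * (1 - q ^ 6 * t ^ 4)) +
        q ^ 12 * t ^ 9 / ((1 - q ^ 3 * t ^ 3) * (1 - q ^ 9 * t ^ 6))) := by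
  have hqt₂ : q ^ 3 * t ^ 2 < 1 := by nlinarith [one_lt_pow₀ hq three_ne_zero]
  exact heisenberg_J1_general (hq.trans_le (le_abs_self q))
    (by rwa [Real.norm_of_nonneg (by positivity)])
end
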